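/- Let 𝚫 ∈ 𝒜 and α ∈ Δ₁. Then α is a branch arrow if and only if α ∉ 𝒞_𝚫, and α is a cycle arrow if and only if α ∈ 𝒞_𝚫. -/

import Mathlib

/-! Common formalization infrastructure for gentle quivers (Bobinski–Buan,
    "Derived equivalence classification of gentle cluster tilted algebras"). -/

/-- A (finite) quiver with (length-two, monomial) relations.  Vertices and
arrows are natural numbers; `V` and `A` are the finite sets of vertices and
arrows, `src`/`tgt` give the start and terminus of each arrow, and `rel` is the
set of relations, a relation `(a, b)` standing for the length-two path
`a·b` (so `src a = tgt b`). -/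
structure QuivRel where
  V : Finset ℕ
  A : Finset ℕ
  src : ℕ → ℕ
  tgt : ℕ → ℕ
  rel : Finset (ℕ × ℕ)

namespace GentleQuiv

/-- Two vertices are adjacent if some arrow joins them (in either direction). -/
def Adj (Q : QuivRel) (x y : ℕ) : Prop :=
  ∃ a ∈ Q.A, (Q.src a = x ∧ Q.tgt a = y) ∨ (Q.src a = y ∧ Q.tgt a = x)

/-- A quiver is connected if any two of its vertices are joined by a walk. -/
def Connected (Q : QuivRel) : Prop :=
  ∀ x ∈ Q.V, ∀ y ∈ Q.V, Relation.ReflTransGen (Adj Q) x y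

/-- `l = [α₁, …, αₙ]` is a (nonempty) path in the quiver: consecutive arrows
compose, i.e. `s αᵢ = t αᵢ₊₁`. -/
def IsPathList (Q : QuivRel) (l : List ℕ) : Prop :=
  l ≠ [] ∧ (∀ a ∈ l, a ∈ Q.A) ∧ l.Chain' (fun a b => Q.src a = Q.tgt b)

/-- The path `l` contains a subpath (two consecutive arrows) lying in `R`. -/
def HasRelSubpath (Q : QuivRel) (l : List ℕ) : Prop :=
  ∃ a b, (a, b) ∈ Q.rel ∧ [a, b] <:+: l

/-- Gentle quiver: connected, relations are composable pairs of arrows, at most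
two arrows in/out of every vertex, the usual gentleness conditions on
relations, and a global bound forcing finite dimensionality. -/
def IsGentle (Q : QuivRel) : Prop :=
  Q.V.Nonempty ∧
  (∀ a ∈ Q.A, Q.src a ∈ Q.V ∧ Q.tgt a ∈ Q.V) ∧
  Connected Q ∧
  (∀ ρ ∈ Q.rel, ρ.1 ∈ Q.A ∧ ρ.2 ∈ Q.A ∧ Q.src ρ.1 = Q.tgt ρ.2) ∧
  (∀ x, (Q.A.filter fun a => Q.src a = x).card ≤ 2) ∧
  (∀ x, (Q.A.filter fun a => Q.tgt a = x).card ≤ 2) ∧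
  (∀ a ∈ Q.A, (Q.A.filter fun b => Q.src b = Q.tgt a ∧ (b, a) ∉ Q.rel).card ≤ 1) ∧
  (∀ a ∈ Q.A, (Q.A.filter fun c => Q.tgt c = Q.src a ∧ (a, c) ∉ Q.rel).card ≤ 1) ∧
  (∀ a ∈ Q.A, (Q.A.filter fun b => (b, a) ∈ Q.rel).card ≤ 1) ∧
  (∀ a ∈ Q.A, (Q.A.filter fun c => (a, c) ∈ Q.rel).card ≤ 1) ∧
  (∃ n : ℕ, ∀ l : List ℕ, IsPathList Q l → l.length = n → HasRelSubpath Q l)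

/-- A choice of functions `σ, τ : Δ₁ → {±1}` as in Avella-Alaminos–Geiss. -/
structure SigmaTau (Q : QuivRel) where
  σ : ℕ → ℤ
  τ : ℕ → ℤ
  σ_pm : ∀ a ∈ Q.A, σ a = 1 ∨ σ a = -1
  τ_pm : ∀ a ∈ Q.A, τ a = 1 ∨ τ a = -1
  σ_src : ∀ a ∈ Q.A, ∀ b ∈ Q.A, a ≠ b → Q.src a = Q.src b → σ a = -σ b
  τ_tgt : ∀ a ∈ Q.A, ∀ b ∈ Q.A, a ≠ b → Q.tgt a = Q.tgt b → τ a = -τ b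
  rel_iff : ∀ a ∈ Q.A, ∀ b ∈ Q.A, Q.src a = Q.tgt b → ((a, b) ∈ Q.rel ↔ σ a = τ b)

/-- A thread: either a trivial path/antipath `1_{x,ε}` at a vertex `x` with a
sign `ε`, or a sequence of arrows of positive length. -/
inductive Thread where
  | triv (x : ℕ) (ε : ℤ) : Thread
  | arrows (l : List ℕ) : Thread
deriving DecidableEq

/-- Source of a thread. -/
def Thread.source (Q : QuivRel) : Thread → ℕ
  | .triv x _ => x
  | .arrows l => Q.src l.getLast!

/-- Target of a thread. -/
def Thread.target (Q : QuivRel) : Thread → ℕ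
  | .triv x _ => x
  | .arrows l => Q.tgt l.head!

/-- `σω` (for paths and antipaths alike; `σ 1_{x,ε} = ε = σ 1'_{x,ε}`). -/
def Thread.sigma {Q : QuivRel} (st : SigmaTau Q) : Thread → ℤ
  | .triv _ ε => ε
  | .arrows l => st.σ l.getLast!

/-- `τω` when `ω` is regarded as a path (`τ 1_{x,ε} = -ε`). -/
def Thread.tauPath {Q : QuivRel} (st : SigmaTau Q) : Thread → ℤ
  | .triv _ ε => -ε
  | .arrows l => st.τ l.head!

/-- `τω` when `ω` is regarded as an antipath (`τ 1'_{x,ε} = ε`). -/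
def Thread.tauAnti {Q : QuivRel} (st : SigmaTau Q) : Thread → ℤ
  | .triv _ ε => ε
  | .arrows l => st.τ l.head!

/-- Length of a thread. -/
def Thread.len : Thread → ℕ
  | .triv _ _ => 0
  | .arrows l => l.length

/-- A path in `𝚫` of positive length (no two consecutive arrows in `R`). -/
def IsPermList (Q : QuivRel) (l : List ℕ) : Prop :=
  IsPathList Q l ∧ l.Chain' (fun a b => (a, b) ∉ Q.rel)

/-- An antipath in `𝚫` of positive length (all consecutive pairs in `R`). -/
def IsAntiList (Q : QuivRel) (l : List ℕ) : Prop :=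
  l ≠ [] ∧ (∀ a ∈ l, a ∈ Q.A) ∧ l.Chain' (fun a b => (a, b) ∈ Q.rel)

/-- A thread is a path in `𝚫` (including trivial ones). -/
def IsPathThread (Q : QuivRel) : Thread → Prop
  | .triv x ε => x ∈ Q.V ∧ (ε = 1 ∨ ε = -1)
  | .arrows l => IsPermList Q l

/-- A thread is an antipath in `𝚫` (including trivial ones). -/
def IsAntiThread (Q : QuivRel) : Thread → Prop
  | .triv x ε => x ∈ Q.V ∧ (ε = 1 ∨ ε = -1)
  | .arrows l => IsAntiList Q l

/-- `w ∈ ℳ`: `w` is a maximal path of `𝚫`. -/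
def InM (Q : QuivRel) (st : SigmaTau Q) (w : Thread) : Prop :=
  IsPathThread Q w ∧
  (¬ ∃ a ∈ Q.A, Q.src a = w.target Q ∧ st.σ a = -(w.tauPath st)) ∧
  (¬ ∃ b ∈ Q.A, Q.tgt b = w.source Q ∧ st.τ b = -(w.sigma st))

/-- `w ∈ 𝒩`: `w` is a maximal antipath of `𝚫`. -/
def InN (Q : QuivRel) (st : SigmaTau Q) (w : Thread) : Prop :=
  IsAntiThread Q w ∧
  (¬ ∃ a ∈ Q.A, Q.src a = w.target Q ∧ st.σ a = w.tauAnti st) ∧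
  (¬ ∃ b ∈ Q.A, Q.tgt b = w.source Q ∧ st.τ b = w.sigma st)

/-- The graph of the bijection `Φ = φ ∘ ψ : 𝒩 → 𝒩`:  `PhiRel Q st w w'` holds
iff `w, w' ∈ 𝒩` and the maximal path `ψ w` (with `s(ψw) = sw`, `σ(ψw) = -σw`)
satisfies `t w' = t (ψ w)` and `τ w' = -τ(ψ w)`, i.e. `w' = φ (ψ w) = Φ w`. -/
def PhiRel (Q : QuivRel) (st : SigmaTau Q) (w w' : Thread) : Prop :=
  InN Q st w ∧ InN Q st w' ∧
  ∃ m : Thread, InM Q st m ∧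
    m.source Q = w.source Q ∧ m.sigma st = -(w.sigma st) ∧
    w'.target Q = m.target Q ∧ w'.tauAnti st = -(m.tauPath st)

/-- `O` is an orbit of the `ℤ`-action on `𝒩` induced by `Φ`. -/
def NOrbit (Q : QuivRel) (st : SigmaTau Q) (O : Set Thread) : Prop :=
  ∃ w, InN Q st w ∧ O = {w' | Relation.EqvGen (PhiRel Q st) w w'}

/-- `p(𝒪) = |𝒪|` for an orbit `𝒪 ∈ 𝒩/ℤ`. -/
noncomputable def pN (O : Set Thread) : ℕ := O.ncard

/-- `q(𝒪) = Σ_{ω ∈ 𝒪} ℓ(ω)` for an orbit `𝒪 ∈ 𝒩/ℤ`. -/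
noncomputable def qN (O : Set Thread) : ℕ := ∑ᶠ w ∈ O, Thread.len w

/-- `a ∈ 𝒞`: the arrow `a` occurs in no maximal antipath. -/
def InC (Q : QuivRel) (st : SigmaTau Q) (a : ℕ) : Prop :=
  a ∈ Q.A ∧ ¬ ∃ l : List ℕ, InN Q st (.arrows l) ∧ a ∈ l

/-- The graph of the bijection `Ψ : 𝒞 → 𝒞`. -/
def PsiRel (Q : QuivRel) (st : SigmaTau Q) (a b : ℕ) : Prop :=
  InC Q st a ∧ InC Q st b ∧ Q.tgt b = Q.src a ∧ st.τ b = st.σ a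

/-- `O` is an orbit of the `ℤ`-action on `𝒞` induced by `Ψ`. -/
def COrbit (Q : QuivRel) (st : SigmaTau Q) (O : Set ℕ) : Prop :=
  ∃ a, InC Q st a ∧ O = {b | Relation.EqvGen (PsiRel Q st) a b}

/-- The Avella-Alaminos–Geiss invariant `f_𝚫 : ℕ² → ℕ`:  `f_𝚫 (p,q)` counts the
orbits `𝒪 ∈ 𝒩/ℤ ⊔ 𝒞/ℤ` with `p(𝒪) = p` and `q(𝒪) = q`. -/
noncomputable def fInv (Q : QuivRel) (st : SigmaTau Q) : ℕ × ℕ → ℕ := fun pq =>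
  {O : Set Thread | NOrbit Q st O ∧ pN O = pq.1 ∧ qN O = pq.2}.ncard +
  {O : Set ℕ | COrbit Q st O ∧ pq.1 = 0 ∧ O.ncard = pq.2}.ncard

/-- `[p, q] : ℕ² → ℕ`, the characteristic function of `{(p, q)}`. -/
def charFn (p q : ℕ) : ℕ × ℕ → ℕ := fun pq => if pq = (p, q) then 1 else 0

/-- Tree type: `|Δ₀| = |Δ₁| + 1`. -/
def TreeType (Q : QuivRel) : Prop := Q.V.card = Q.A.card + 1

/-- Removing a set of arrows (keeping all vertices); relations containing a
removed arrow are discarded. -/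
def deleteArrows (Q : QuivRel) (S : Finset ℕ) : QuivRel where
  V := Q.V
  A := Q.A \ S
  src := Q.src
  tgt := Q.tgt
  rel := Q.rel.filter fun ρ => ρ.1 ∉ S ∧ ρ.2 ∉ S

/-- Branch arrow: removing it disconnects the quiver. -/
def BranchArrow (Q : QuivRel) (a : ℕ) : Prop :=
  a ∈ Q.A ∧ ¬ Connected (deleteArrows Q {a})

/-- Cycle arrow: removing it leaves the quiver connected. -/
def CycleArrow (Q : QuivRel) (a : ℕ) : Prop :=
  a ∈ Q.A ∧ Connected (deleteArrows Q {a})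

/-- Branch relation: a relation one of whose arrows is a branch arrow. -/
def BranchRel (Q : QuivRel) (ρ : ℕ × ℕ) : Prop :=
  ρ ∈ Q.rel ∧ (BranchArrow Q ρ.1 ∨ BranchArrow Q ρ.2)

/-- A relation `ρ = (α, β)` is isolated if the antipath `(α, β)` is a maximal
antipath, i.e. `ρ ∈ 𝒩`. -/
def Isolated (Q : QuivRel) (st : SigmaTau Q) (ρ : ℕ × ℕ) : Prop :=
  ρ ∈ Q.rel ∧ InN Q st (.arrows [ρ.1, ρ.2])

/-- `Q'` is obtained from `Q` by completing the relations from `R₀`, the new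
arrow attached to `ρ ∈ R₀` being `γ ρ`. -/
structure IsCompletion (Q : QuivRel) (R0 : Finset (ℕ × ℕ)) (γ : ℕ × ℕ → ℕ)
    (Q' : QuivRel) : Prop where
  subset : R0 ⊆ Q.rel
  fresh : ∀ ρ ∈ R0, γ ρ ∉ Q.A
  inj : ∀ ρ ∈ R0, ∀ ρ' ∈ R0, γ ρ = γ ρ' → ρ = ρ'
  V_eq : Q'.V = Q.V
  A_eq : Q'.A = Q.A ∪ R0.image γ
  src_old : ∀ a ∈ Q.A, Q'.src a = Q.src a
  tgt_old : ∀ a ∈ Q.A, Q'.tgt a = Q.tgt a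
  src_new : ∀ ρ ∈ R0, Q'.src (γ ρ) = Q.tgt ρ.1
  tgt_new : ∀ ρ ∈ R0, Q'.tgt (γ ρ) = Q.src ρ.2
  rel_eq : Q'.rel = Q.rel ∪ R0.image (fun ρ => (γ ρ, ρ.1)) ∪
      R0.image (fun ρ => (ρ.2, γ ρ))

/-- A 3-cycle: three pairwise distinct arrows forming an oriented cycle. -/
def Is3Cycle (Q : QuivRel) (a0 a1 a2 : ℕ) : Prop :=
  a0 ∈ Q.A ∧ a1 ∈ Q.A ∧ a2 ∈ Q.A ∧ a0 ≠ a1 ∧ a1 ≠ a2 ∧ a0 ≠ a2 ∧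
  Q.src a0 = Q.tgt a1 ∧ Q.src a1 = Q.tgt a2 ∧ Q.src a2 = Q.tgt a0

/-- A triangle: a 3-cycle all of whose three compositions are relations. -/
def IsTriangleTriple (Q : QuivRel) (a0 a1 a2 : ℕ) : Prop :=
  Is3Cycle Q a0 a1 a2 ∧ (a0, a1) ∈ Q.rel ∧ (a1, a2) ∈ Q.rel ∧ (a2, a0) ∈ Q.rel

/-- The (unordered) set of arrows of a triangle. -/
def TriangleSet (Q : QuivRel) (O : Finset ℕ) : Prop :=
  ∃ a0 a1 a2, O = {a0, a1, a2} ∧ IsTriangleTriple Q a0 a1 a2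

/-- Branch triangle: removing any two of its arrows disconnects the quiver. -/
def BranchTriangle (Q : QuivRel) (O : Finset ℕ) : Prop :=
  TriangleSet Q O ∧ ∀ S ⊆ O, S.card = 2 → ¬ Connected (deleteArrows Q S)

/-- Free relation: a relation neither of whose arrows lies in `𝒞`. -/
def FreeRel (Q : QuivRel) (st : SigmaTau Q) (ρ : ℕ × ℕ) : Prop :=
  ρ ∈ Q.rel ∧ ¬ InC Q st ρ.1 ∧ ¬ InC Q st ρ.2

/-- The class `𝒜`: gentle quivers with `f_𝚫 = m·[0,3] + [p+m+2, p]`. -/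
def ClassA (Q : QuivRel) (st : SigmaTau Q) : Prop :=
  IsGentle Q ∧ ∃ m p : ℕ, ∀ x, fInv Q st x = m * charFn 0 3 x + charFn (p + m + 2) p x

/-- The class `Ã`: gentle quivers with
`f_𝚫 = (m₁+m₂)·[0,3] + [p+m₁, p] + [q+m₂, q]`, `p+m₁ > 0`, `q+m₂ > 0`. -/
def ClassAtilde (Q : QuivRel) (st : SigmaTau Q) : Prop :=
  IsGentle Q ∧ ∃ m1 m2 p q : ℕ, 0 < p + m1 ∧ 0 < q + m2 ∧
    ∀ x, fInv Q st x =
      (m1 + m2) * charFn 0 3 x + charFn (p + m1) p x + charFn (q + m2) q x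

/-- Isomorphism of quivers with relations. -/
def IsoQR (Q Q' : QuivRel) : Prop :=
  ∃ fV fA : ℕ → ℕ,
    Set.BijOn fV ↑Q.V ↑Q'.V ∧ Set.BijOn fA ↑Q.A ↑Q'.A ∧
    (∀ a ∈ Q.A, Q'.src (fA a) = fV (Q.src a) ∧ Q'.tgt (fA a) = fV (Q.tgt a)) ∧
    (∀ a ∈ Q.A, ∀ b ∈ Q.A, ((a, b) ∈ Q.rel ↔ (fA a, fA b) ∈ Q'.rel))

/-- The quiver has no loops. -/
def NoLoops (Q : QuivRel) : Prop := ∀ a ∈ Q.A, Q.src a ≠ Q.tgt a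

/-- The reflection at `x` is defined: every arrow starting at `x` admits a
(necessarily unique) companion arrow ending at `x` not bound by a relation. -/
def CanReflect (Q : QuivRel) (x : ℕ) : Prop :=
  x ∈ Q.V ∧ ∀ a ∈ Q.A, Q.src a = x → ∃ b ∈ Q.A, Q.tgt b = x ∧ (a, b) ∉ Q.rel

/-- `Q'` is the reflection of the gentle loop-free quiver `Q` at the vertex
`x`, following Brenner–Butler tilting. -/
def IsReflection (Q : QuivRel) (x : ℕ) (Q' : QuivRel) : Prop :=
  IsGentle Q ∧ NoLoops Q ∧ CanReflect Q x ∧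
  Q'.V = Q.V ∧ Q'.A = Q.A ∧
  (∀ a ∈ Q.A, Q.tgt a = x → Q'.src a = x ∧ Q'.tgt a = Q.src a) ∧
  (∀ a ∈ Q.A, Q.src a = x →
    ∀ b ∈ Q.A, Q.tgt b = x → (a, b) ∉ Q.rel → Q'.src a = Q.src b) ∧
  (∀ a ∈ Q.A, Q.tgt a ≠ x → Q.src a ≠ x → Q'.src a = Q.src a) ∧
  (∀ a ∈ Q.A, Q.tgt a ≠ x →
    ((∃ b ∈ Q.A, Q.tgt b = x ∧ Q.src b = Q.tgt a ∧ (b, a) ∈ Q.rel) → Q'.tgt a = x) ∧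
    ((¬ ∃ b ∈ Q.A, Q.tgt b = x ∧ Q.src b = Q.tgt a ∧ (b, a) ∈ Q.rel) →
      Q'.tgt a = Q.tgt a)) ∧
  (∀ a b : ℕ, (a, b) ∈ Q'.rel ↔
    (((a, b) ∈ Q.rel ∧ Q.tgt a ≠ x ∧ Q.src a ≠ x) ∨
     (a ∈ Q.A ∧ b ∈ Q.A ∧ Q.src a = x ∧ Q.tgt b = x ∧ (a, b) ∉ Q.rel) ∨
     (a ∈ Q.A ∧ b ∈ Q.A ∧ Q.tgt a = x ∧
       ∃ c ∈ Q.A, c ≠ a ∧ Q.tgt c = x ∧ Q.src c = Q.tgt b ∧ (c, b) ∈ Q.rel)))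

/-- The opposite quiver with relations. -/
def opQR (Q : QuivRel) : QuivRel where
  V := Q.V
  A := Q.A
  src := Q.tgt
  tgt := Q.src
  rel := Q.rel.image fun ρ => (ρ.2, ρ.1)

/-- Coreflection: the dual of reflection. -/
def IsCoreflection (Q : QuivRel) (x : ℕ) (Q' : QuivRel) : Prop :=
  IsReflection (opQR Q) x (opQR Q')

/-- One step of reflection equivalence: a reflection, a coreflection, or an
isomorphism of quivers with relations. -/
def RefStep (Q Q' : QuivRel) : Prop :=
  (∃ x, IsReflection Q x Q') ∨ (∃ x, IsCoreflection Q x Q') ∨ IsoQR Q Q'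

/-- Reflection equivalence: a finite sequence of reflections/coreflections,
up to isomorphism of quivers with relations. -/
def RefEquiv : QuivRel → QuivRel → Prop := Relation.ReflTransGen RefStep

/-- A cyclic orientation of a `1`-cycle quiver without branch arrows (i.e. a
cycle): enumerations of the vertices and arrows by `ZMod n` such that the
`i`-th arrow joins the `i`-th and `(i+1)`-st vertices. -/
structure CyclicOrientation (Q : QuivRel) (n : ℕ) where
  ev : ZMod n → ℕ
  ea : ZMod n → ℕ
  ev_mem : ∀ i, ev i ∈ Q.V
  ea_mem : ∀ i, ea i ∈ Q.A
  ev_inj : Function.Injective ev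
  ea_inj : Function.Injective ea
  ev_surj : ∀ v ∈ Q.V, ∃ i, ev i = v
  ea_surj : ∀ a ∈ Q.A, ∃ i, ea i = a
  compat : ∀ i : ZMod n,
    (Q.src (ea i) = ev i ∧ Q.tgt (ea i) = ev (i + 1)) ∨
    (Q.src (ea i) = ev (i + 1) ∧ Q.tgt (ea i) = ev i)

/-- Clockwise arrow with respect to a cyclic orientation. -/
def Clockwise (Q : QuivRel) {n : ℕ} (co : CyclicOrientation Q n) (a : ℕ) : Prop :=
  a ∈ Q.A ∧ ∃ i : ZMod n, co.ea i = a ∧ Q.src a = co.ev i ∧ Q.tgt a = co.ev (i + 1)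

/-- Anticlockwise arrow with respect to a cyclic orientation. -/
def Anticlockwise (Q : QuivRel) {n : ℕ} (co : CyclicOrientation Q n) (a : ℕ) : Prop :=
  a ∈ Q.A ∧ ∃ i : ZMod n, co.ea i = a ∧ Q.src a = co.ev (i + 1) ∧ Q.tgt a = co.ev i

end GentleQuiv

namespace GentleQuiv

/-!
By gentleness, `(α, β) ∈ R` is a partial injection on the arrows: its finite lines are the maximal
antipaths of positive length and its cycles are the `Ψ`-orbits in `𝒞`. Such a cycle is a closed walk
of the quiver, so an arrow of `𝒞` can be bypassed through the rest of its `Ψ`-orbit. Hence deleting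
one arrow from each `Ψ`-orbit leaves a connected quiver, and it stays connected if the arrow `a ∉ 𝒞`
is deleted in addition, provided that deleting `a` alone does not disconnect.

On the other hand, the maximal antipaths `ω` are determined by `(tω, τω)`, which is one of the
`2|Δ₀| - |Δ₁|` pairs `(x, ε)` that are not `(sα, σα)` for an arrow `α`. In the class `𝒜` there are
`p + m + 2` maximal antipaths, and `|Δ₁| ≤ p + 3m` because every arrow lies in `𝒞` or in a maximal
antipath. Together these give `|Δ₁| + 1 ≤ |Δ₀| + m`, so deleting one arrow from each of the `m`
orbits in `𝒞` leaves a spanning tree, in which no further arrow can be spared.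
-/

section EquivalenceClasses

variable {α : Type*} {r : α → α → Prop} {s : Set α}

/-- The classes of the equivalence relation generated by `r` that are represented by an element
of `s`. The orbit sets `𝒩/ℤ` and `𝒞/ℤ` are `eqvGenClasses Φ 𝒩` and `eqvGenClasses Ψ 𝒞`. -/
def eqvGenClasses (r : α → α → Prop) (s : Set α) : Set (Set α) :=
  (fun x => {y | Relation.EqvGen r x y}) '' s

theorem nonempty_of_mem_eqvGenClasses {O : Set α} (hO : O ∈ eqvGenClasses r s) : O.Nonempty := by
  obtain ⟨x, -, rfl⟩ := hO
  exact ⟨x, .refl x⟩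

theorem subset_of_mem_eqvGenClasses (hr : ∀ x y, r x y → x ∈ s ∧ y ∈ s) {O : Set α}
    (hO : O ∈ eqvGenClasses r s) : O ⊆ s := by
  obtain ⟨x, hx, rfl⟩ := hO
  intro y hxy
  have hs : Equivalence fun x y => x ∈ s ↔ y ∈ s := ⟨fun _ => .rfl, .symm, .trans⟩
  exact (hs.eqvGen_iff.1 (hxy.mono fun a b hab => iff_of_true (hr a b hab).1 (hr a b hab).2)).1 hx

theorem sUnion_eqvGenClasses (hr : ∀ x y, r x y → x ∈ s ∧ y ∈ s) : ⋃₀ eqvGenClasses r s = s :=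
  (Set.sUnion_subset fun _ => subset_of_mem_eqvGenClasses hr).antisymm fun x hx =>
    ⟨_, Set.mem_image_of_mem _ hx, .refl x⟩

theorem ncard_le_mul_ncard_eqvGenClasses (hr : ∀ x y, r x y → x ∈ s ∧ y ∈ s) (hs : s.Finite)
    {k : ℕ} (hk : ∀ O ∈ eqvGenClasses r s, O.ncard ≤ k) :
    s.ncard ≤ k * (eqvGenClasses r s).ncard := by
  have hfin : (eqvGenClasses r s).Finite := hs.image _
  calc s.ncard = (⋃ O ∈ hfin.toFinset, O).ncard := by
        simp [← Set.sUnion_eq_biUnion, sUnion_eqvGenClasses hr]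
    _ ≤ ∑ O ∈ hfin.toFinset, O.ncard := Finset.set_ncard_biUnion_le _ _
    _ ≤ hfin.toFinset.card * k :=
        Finset.sum_le_card_nsmul _ _ _ fun O hO => hk O (hfin.mem_toFinset.1 hO)
    _ = k * (eqvGenClasses r s).ncard := by
        rw [Set.ncard_eq_toFinset_card _ hfin, mul_comm]

theorem exists_finset_transversal (hs : s.Finite) : ∃ X : Finset α, ↑X ⊆ s ∧
    X.card = (eqvGenClasses r s).ncard ∧ ∀ x ∈ X, ∀ y ∈ X, Relation.EqvGen r x y → x = y := by
  obtain ⟨X, hXs, hX⟩ := Set.exists_subset_bijOn s fun x => {y | Relation.EqvGen r x y}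
  lift X to Finset α using hs.subset hXs
  refine ⟨X, hXs, by rw [← Set.ncard_coe_finset, hX.ncard_eq]; rfl, fun x hx y hy hxy => ?_⟩
  refine hX.injOn hx hy (Set.ext fun z => ?_)
  exact ⟨(hxy.symm _ _).trans _ _ _, hxy.trans _ _ _⟩

end EquivalenceClasses

theorem ncard_eq_and_forall_eq_of_ncard_fiber {α β : Type*} {T : Set α} (hT : T.Finite)
    (g : α → β) {b : β} {k : ℕ} (hb : {x ∈ T | g x = b}.ncard = k)
    (hne : ∀ c ≠ b, {x ∈ T | g x = c}.ncard = 0) :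
    T.ncard = k ∧ ∀ x ∈ T, g x = b := by
  have hg : ∀ x ∈ T, g x = b := fun x hx => by
    by_contra hxb
    have hempty := (Set.ncard_eq_zero (hT.sep _)).1 (hne (g x) hxb)
    exact Set.eq_empty_iff_forall_notMem.1 hempty x ⟨hx, rfl⟩
  exact ⟨by rw [← hb, Set.sep_eq_self_iff_mem_true.2 hg], hg⟩

section PartialInjections

variable {α : Type*} {r : α → α → Prop}

theorem exists_rel_of_finite_of_leftUnique (hr : Relator.LeftUnique r) {s : Set α} (hs : s.Finite)
    (hsucc : ∀ x ∈ s, ∃ y ∈ s, r x y) {a : α} (ha : a ∈ s) : ∃ x ∈ s, r x a := by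
  choose! f hfs hf using hsucc
  have hinj : s.InjOn f := fun x hx y hy hxy => hr (hf x hx) (hxy ▸ hf y hy)
  obtain ⟨x, hx, rfl⟩ := ((hs.injOn_iff_bijOn_of_mapsTo hfs).1 hinj).surjOn ha
  exact ⟨x, hx, hf x hx⟩

theorem eq_of_isChain_cons_of_rightUnique (hr : Relator.RightUnique r) {x : α} {l l' : List α}
    (hl : (x :: l).IsChain r) (hl' : (x :: l').IsChain r)
    (hmax : ∀ y, ¬ r ((x :: l).getLast (by simp)) y)
    (hmax' : ∀ y, ¬ r ((x :: l').getLast (by simp)) y) : l = l' := by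
  induction l generalizing x l' with
  | nil =>
    cases l' with
    | nil => rfl
    | cons z l' => exact absurd (List.isChain_cons_cons.1 hl').1 (hmax z)
  | cons y l ih =>
    cases l' with
    | nil => exact absurd (List.isChain_cons_cons.1 hl).1 (hmax' y)
    | cons z l' =>
      obtain ⟨hxy, hl⟩ := List.isChain_cons_cons.1 hl
      obtain ⟨hxz, hl'⟩ := List.isChain_cons_cons.1 hl'
      obtain rfl := hr hxy hxz
      rw [ih hl hl' (by simpa using hmax) (by simpa using hmax')]

end PartialInjections

section Connectivity

variable {Q Q' : QuivRel}

instance (Q : QuivRel) : Std.Symm (Adj Q) := ⟨fun _ _ ⟨a, ha, h⟩ => ⟨a, ha, h.symm⟩⟩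

theorem adj_src_tgt {a : ℕ} (ha : a ∈ Q.A) : Adj Q (Q.src a) (Q.tgt a) :=
  ⟨a, ha, .inl ⟨rfl, rfl⟩⟩

theorem Connected.of_forall_reflTransGen (hQ : Connected Q) (hV : Q'.V ⊆ Q.V)
    (hA : ∀ a ∈ Q.A, Relation.ReflTransGen (Adj Q') (Q.src a) (Q.tgt a)) : Connected Q' := by
  refine fun x hx y hy => Relation.ReflTransGen.lift' id ?_ _ _ (hQ x (hV hx) y (hV hy))
  rintro _ _ ⟨a, ha, ⟨rfl, rfl⟩ | ⟨rfl, rfl⟩⟩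
  exacts [hA a ha, symm (hA a ha)]

/-- The simple graph underlying a quiver; loops are discarded and parallel arrows identified. -/
def underlyingGraph (Q : QuivRel) : SimpleGraph Q.V :=
  SimpleGraph.fromRel fun x y => Adj Q x y

theorem connected_underlyingGraph (hV : Q.V.Nonempty)
    (hA : ∀ a ∈ Q.A, Q.src a ∈ Q.V ∧ Q.tgt a ∈ Q.V) (hQ : Connected Q) :
    (underlyingGraph Q).Connected := by
  have hreach (x : Q.V) (y : ℕ) (h : Relation.ReflTransGen (Adj Q) x y) :
      ∃ hy : y ∈ Q.V, (underlyingGraph Q).Reachable x ⟨y, hy⟩ := by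
    induction h with
    | refl => exact ⟨x.2, .refl x⟩
    | @tail y z _ hyz ih =>
      obtain ⟨hy, hxy⟩ := ih
      have hz : z ∈ Q.V := by
        obtain ⟨a, ha, ⟨-, rfl⟩ | ⟨rfl, -⟩⟩ := hyz
        exacts [(hA a ha).2, (hA a ha).1]
      refine ⟨hz, hxy.trans ?_⟩
      obtain rfl | hne := eq_or_ne y z
      · rfl
      · exact SimpleGraph.Adj.reachable ⟨by simpa using hne, .inl hyz⟩
  have : Nonempty Q.V := hV.to_subtype
  exact ⟨fun x y => (hreach x y (hQ x x.2 y y.2)).2⟩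

theorem card_edgeSet_underlyingGraph_le (hA : ∀ a ∈ Q.A, Q.src a ∈ Q.V ∧ Q.tgt a ∈ Q.V) :
    Nat.card (underlyingGraph Q).edgeSet ≤ Q.A.card := by
  let edge (a : Q.A) : Sym2 Q.V := s(⟨Q.src a, (hA a a.2).1⟩, ⟨Q.tgt a, (hA a a.2).2⟩)
  have hsub : (underlyingGraph Q).edgeSet ⊆ Set.range edge := by
    refine Sym2.ind fun x y hxy => ?_
    obtain ⟨a, ha, h⟩ : Adj Q x y := hxy.2.elim id symm
    exact ⟨⟨a, ha⟩, by simpa [edge, Subtype.ext_iff] using h⟩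
  calc Nat.card (underlyingGraph Q).edgeSet
      ≤ Nat.card (Set.range edge) := Nat.card_mono (Set.finite_range _) hsub
    _ ≤ Nat.card Q.A := Finite.card_range_le _
    _ = Q.A.card := by simp

theorem Connected.card_vertices_le (hA : ∀ a ∈ Q.A, Q.src a ∈ Q.V ∧ Q.tgt a ∈ Q.V)
    (hQ : Connected Q) : Q.V.card ≤ Q.A.card + 1 := by
  obtain hV | hV := Q.V.eq_empty_or_nonempty
  · simp [hV]
  · have hcard := (connected_underlyingGraph hV hA hQ).card_vert_le_card_edgeSet_add_one
    have hedges := card_edgeSet_underlyingGraph_le hA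
    rw [Nat.card_eq_fintype_card, Fintype.card_coe] at hcard
    lia

end Connectivity

section Gentle

variable {Q : QuivRel}

theorem SigmaTau.eq_of_src_eq (st : SigmaTau Q) {a b : ℕ} (ha : a ∈ Q.A) (hb : b ∈ Q.A)
    (hsrc : Q.src a = Q.src b) (hσ : st.σ a = st.σ b) : a = b := by
  by_contra hne
  have := st.σ_src a ha b hb hne hsrc
  have := st.σ_pm b hb
  lia

theorem SigmaTau.eq_of_tgt_eq (st : SigmaTau Q) {a b : ℕ} (ha : a ∈ Q.A) (hb : b ∈ Q.A)
    (htgt : Q.tgt a = Q.tgt b) (hτ : st.τ a = st.τ b) : a = b := by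
  by_contra hne
  have := st.τ_tgt a ha b hb hne htgt
  have := st.τ_pm b hb
  lia

theorem IsGentle.src_mem_and_tgt_mem (hg : IsGentle Q) :
    ∀ a ∈ Q.A, Q.src a ∈ Q.V ∧ Q.tgt a ∈ Q.V := hg.2.1

theorem IsGentle.connected (hg : IsGentle Q) : Connected Q := hg.2.2.1

theorem IsGentle.mem_rel_iff (hg : IsGentle Q) (st : SigmaTau Q) {a b : ℕ} :
    (a, b) ∈ Q.rel ↔ a ∈ Q.A ∧ b ∈ Q.A ∧ Q.src a = Q.tgt b ∧ st.σ a = st.τ b := by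
  constructor
  · intro h
    obtain ⟨ha, hb, hab⟩ := hg.2.2.2.1 _ h
    exact ⟨ha, hb, hab, (st.rel_iff a ha b hb hab).1 h⟩
  · rintro ⟨ha, hb, hab, hστ⟩
    exact (st.rel_iff a ha b hb hab).2 hστ

theorem IsGentle.leftUnique_rel (hg : IsGentle Q) :
    Relator.LeftUnique fun a b => (a, b) ∈ Q.rel := by
  obtain ⟨-, -, -, hrel, -, -, -, -, huniq, -⟩ := hg
  intro a b c hac hbc
  exact Finset.card_le_one.1 (huniq c (hrel _ hac).2.1) a (by simp [hac, (hrel _ hac).1])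
    b (by simp [hbc, (hrel _ hbc).1])

theorem IsGentle.rightUnique_rel (hg : IsGentle Q) :
    Relator.RightUnique fun a b => (a, b) ∈ Q.rel := by
  obtain ⟨-, -, -, hrel, -, -, -, -, -, huniq, -⟩ := hg
  intro a b c hab hac
  exact Finset.card_le_one.1 (huniq a (hrel _ hab).1) b (by simp [hab, (hrel _ hab).2.1])
    c (by simp [hac, (hrel _ hac).2.1])

end Gentle

section MaximalAntipaths

variable {Q : QuivRel} {st : SigmaTau Q}

theorem inN_arrows_iff (hg : IsGentle Q) {x : ℕ} {l : List ℕ} :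
    InN Q st (.arrows (x :: l)) ↔ IsAntiList Q (x :: l) ∧ (∀ a, (a, x) ∉ Q.rel) ∧
      ∀ b, ((x :: l).getLast (by simp), b) ∉ Q.rel := by
  have hlast : (x :: l).getLast! = (x :: l).getLast (by simp) := rfl
  refine and_congr_right fun hl : IsAntiList Q (x :: l) => ?_
  have hx : x ∈ Q.A := hl.2.1 x (by simp)
  have hy : (x :: l).getLast (by simp) ∈ Q.A := hl.2.1 _ (List.getLast_mem _)
  have hfirst (a : ℕ) : (a, x) ∈ Q.rel ↔ a ∈ Q.A ∧ Q.src a = Q.tgt x ∧ st.σ a = st.τ x := by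
    simp [hg.mem_rel_iff st, hx]
  have hfinal (b : ℕ) : ((x :: l).getLast (by simp), b) ∈ Q.rel ↔
      b ∈ Q.A ∧ Q.tgt b = Q.src ((x :: l).getLast (by simp)) ∧
        st.τ b = st.σ ((x :: l).getLast (by simp)) := by
    simp [hg.mem_rel_iff st, hy, eq_comm]
  simp only [Thread.target, Thread.source, Thread.tauAnti, Thread.sigma, hlast, List.head!_cons,
    hfirst, hfinal, not_exists]

theorem exists_inN_of_forall_notMem_rel (hg : IsGentle Q) {a : ℕ} (ha : a ∈ Q.A)
    (hmax : ∀ b, (a, b) ∉ Q.rel) : ∃ l, InN Q st (.arrows l) ∧ a ∈ l := by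
  let R : ℕ → ℕ → Prop := fun a b => (a, b) ∈ Q.rel
  let s : Set ℕ := {x ∈ Q.A | Relation.ReflTransGen R x a}
  have hs : s.Finite := Q.A.finite_toSet.subset (Set.sep_subset _ _)
  obtain ⟨x, ⟨hxA, hxa⟩, hx⟩ : ∃ x ∈ s, ∀ y, (y, x) ∉ Q.rel := by
    by_contra! hpred
    have hsucc : ∀ x ∈ s, ∃ y ∈ s, (y, x) ∈ Q.rel := fun x hx => by
      obtain ⟨y, hyx⟩ := hpred x hx
      exact ⟨y, ⟨((hg.mem_rel_iff st).1 hyx).1, .head hyx hx.2⟩, hyx⟩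
    obtain ⟨b, -, hab⟩ := exists_rel_of_finite_of_leftUnique (r := flip R)
      (fun _ _ _ h h' => hg.rightUnique_rel h h') hs hsucc ⟨ha, .refl⟩
    exact hmax b hab
  obtain ⟨l, hl, rfl⟩ := List.exists_isChain_cons_of_relationReflTransGen hxa
  have hlA : ∀ b ∈ x :: l, b ∈ Q.A :=
    hl.induction (· ∈ Q.A) _ (fun _ _ hyz _ => ((hg.mem_rel_iff st).1 hyz).2.1) fun _ => hxA
  exact ⟨x :: l, (inN_arrows_iff hg).2 ⟨⟨by simp, hlA, hl⟩, hx, hmax⟩, List.getLast_mem _⟩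

theorem InC.of_mem_rel (hg : IsGentle Q) {a b : ℕ} (ha : InC Q st a) (hab : (a, b) ∈ Q.rel) :
    InC Q st b := by
  refine ⟨((hg.mem_rel_iff st).1 hab).2.1, ?_⟩
  rintro ⟨_ | ⟨x, l⟩, hl, hb⟩
  · cases hb
  obtain ⟨⟨-, -, hchain⟩, hx, -⟩ := (inN_arrows_iff hg).1 hl
  obtain ⟨i, hi, rfl⟩ := List.getElem_of_mem hb
  cases i with
  | zero => exact hx a hab
  | succ i =>
    obtain rfl := hg.leftUnique_rel hab (List.isChain_iff_getElem.1 hchain i hi)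
    exact ha.2 ⟨x :: l, hl, List.getElem_mem _⟩

theorem InC.exists_psiRel (hg : IsGentle Q) {a : ℕ} (ha : InC Q st a) : ∃ b, PsiRel Q st a b := by
  obtain ⟨b, hab⟩ : ∃ b, (a, b) ∈ Q.rel := by
    by_contra! hmax
    exact ha.2 (exists_inN_of_forall_notMem_rel hg ha.1 hmax)
  obtain ⟨-, -, hsrc, hσ⟩ := (hg.mem_rel_iff st).1 hab
  exact ⟨b, ha, ha.of_mem_rel hg hab, hsrc.symm, hσ.symm⟩

theorem leftUnique_psiRel : Relator.LeftUnique (PsiRel Q st) :=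
  fun _ _ _ ⟨ha, _, hsrc, hσ⟩ ⟨hb, _, hsrc', hσ'⟩ =>
    st.eq_of_src_eq ha.1 hb.1 (hsrc.symm.trans hsrc') (hσ.symm.trans hσ')

theorem finite_setOf_inC : {a | InC Q st a}.Finite :=
  Q.A.finite_toSet.subset fun _ ha => ha.1

end MaximalAntipaths

section CycleArrows

variable {Q : QuivRel} {st : SigmaTau Q}

theorem InC.reflTransGen_adj_deleteArrows (hg : IsGentle Q) {a : ℕ} (ha : InC Q st a)
    {S : Finset ℕ} (hS : ∀ b ∈ S, Relation.EqvGen (PsiRel Q st) a b → b = a) :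
    Relation.ReflTransGen (Adj (deleteArrows Q S)) (Q.src a) (Q.tgt a) := by
  -- Following `Ψ` from `a`, each arrow before the return to `a` survives the deletion.
  let D : Set ℕ := {c | InC Q st c ∧ Relation.EqvGen (PsiRel Q st) a c ∧
    Relation.ReflTransGen (Adj (deleteArrows Q S)) (Q.src a) (Q.src c)}
  have hD : D.Finite := finite_setOf_inC.subset fun _ hc => hc.1
  obtain ⟨c, ⟨-, -, hc⟩, -, -, htgt, -⟩ : ∃ c ∈ D, PsiRel Q st c a := by
    by_contra! hreturn
    have hstep : ∀ c ∈ D, ∃ b ∈ D, PsiRel Q st c b := by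
      rintro c ⟨hc, hac, hwalk⟩
      obtain ⟨b, hcb⟩ := hc.exists_psiRel hg
      have hab := hac.trans _ _ _ (.rel _ _ hcb)
      have hne : b ≠ a := fun h => hreturn c ⟨hc, hac, hwalk⟩ (h ▸ hcb)
      obtain ⟨-, hb, htgt, -⟩ := id hcb
      have hkept : b ∈ (deleteArrows Q S).A :=
        Finset.mem_sdiff.2 ⟨hb.1, fun hbS => hne (hS b hbS hab)⟩
      exact ⟨b, ⟨hb, hab, hwalk.tail (htgt ▸ symm (adj_src_tgt hkept))⟩, hcb⟩
    obtain ⟨c, hc, hca⟩ :=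
      exists_rel_of_finite_of_leftUnique leftUnique_psiRel hD hstep ⟨ha, .refl a, .refl⟩
    exact hreturn c hc hca
  rwa [htgt]

theorem Connected.deleteArrows_union (hg : IsGentle Q) {S X : Finset ℕ}
    (hconn : Connected (deleteArrows Q S)) (hS : ∀ b ∈ S, ¬ InC Q st b)
    (hXC : ∀ x ∈ X, InC Q st x)
    (hX : ∀ x ∈ X, ∀ y ∈ X, Relation.EqvGen (PsiRel Q st) x y → x = y) :
    Connected (deleteArrows Q (S ∪ X)) := by
  refine hconn.of_forall_reflTransGen (Finset.Subset.refl Q.V) fun b hb => ?_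
  obtain ⟨hbA, hbS⟩ := Finset.mem_sdiff.1 hb
  by_cases hbX : b ∈ X
  · refine (hXC b hbX).reflTransGen_adj_deleteArrows hg fun c hc hbc => ?_
    have hcC : InC Q st c := subset_of_mem_eqvGenClasses (s := {x | InC Q st x})
      (fun _ _ h => ⟨h.1, h.2.1⟩) (Set.mem_image_of_mem _ (hXC b hbX)) hbc
    obtain hcS | hcX := Finset.mem_union.1 hc
    · exact absurd hcC (hS c hcS)
    · exact (hX b hbX c hcX hbc).symm
  · exact .single (adj_src_tgt (Q := deleteArrows Q (S ∪ X)) (by simp [deleteArrows, *]))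

theorem InC.connected_deleteArrows (hg : IsGentle Q) {a : ℕ} (ha : InC Q st a) :
    Connected (deleteArrows Q {a}) := by
  have hempty : Connected (deleteArrows Q ∅) := by simpa [deleteArrows] using hg.connected
  simpa using hempty.deleteArrows_union hg (X := {a}) (st := st) (by simp) (by simp [ha]) (by simp)

theorem setOf_cOrbit : {O | COrbit Q st O} = eqvGenClasses (PsiRel Q st) {a | InC Q st a} := by
  ext O
  simp [COrbit, eqvGenClasses, eq_comm]

theorem inC_of_connected_deleteArrows (hg : IsGentle Q)
    (hcard : Q.A.card + 1 ≤ Q.V.card + {O | COrbit Q st O}.ncard) {a : ℕ} (ha : a ∈ Q.A)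
    (hconn : Connected (deleteArrows Q {a})) : InC Q st a := by
  by_contra haC
  obtain ⟨X, hXC, hXcard, hX⟩ :=
    exists_finset_transversal (r := PsiRel Q st) (finite_setOf_inC (Q := Q) (st := st))
  rw [← setOf_cOrbit] at hXcard
  have hconn' : Connected (deleteArrows Q ({a} ∪ X)) :=
    hconn.deleteArrows_union hg (by simpa using haC) hXC hX
  have hV : Q.V.card ≤ (Q.A \ ({a} ∪ X)).card + 1 :=
    Connected.card_vertices_le (Q := deleteArrows Q ({a} ∪ X))
      (fun b hb => hg.src_mem_and_tgt_mem b (Finset.mem_sdiff.1 hb).1) hconn'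
  have hA : (Q.A \ ({a} ∪ X)).card + (1 + X.card) = Q.A.card := by
    have haX : a ∉ X := fun h => haC (hXC h)
    rw [← Finset.card_singleton a, ← Finset.card_union_of_disjoint (by simpa using haX)]
    refine Finset.card_sdiff_add_card_eq_card (Finset.union_subset (by simpa using ha) ?_)
    exact fun x hx => (hXC hx).1
  lia

end CycleArrows

section Counting

variable {Q : QuivRel} {st : SigmaTau Q}

theorem InN.target_mem_and_tauAnti (hg : IsGentle Q) {w : Thread} (hw : InN Q st w) :
    w.target Q ∈ Q.V ∧ (w.tauAnti st = 1 ∨ w.tauAnti st = -1) := by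
  match w, hw.1 with
  | .triv _ _, h => exact h
  | .arrows [], h => exact absurd rfl h.1
  | .arrows (x :: _), h =>
    have hx := h.2.1 x (by simp)
    exact ⟨(hg.src_mem_and_tgt_mem x hx).2, st.τ_pm x hx⟩

theorem InN.false_of_triv_of_arrows {x : ℕ} {ε : ℤ} {l : List ℕ} (hw : InN Q st (.triv x ε))
    (hl : InN Q st (.arrows l)) (htgt : x = (Thread.arrows l).target Q)
    (hτ : ε = (Thread.arrows l).tauAnti st) : False := by
  match l, hl with
  | [], hl => exact hl.1.1 rfl
  | y :: _, hl => exact hw.2.2 ⟨y, hl.1.2.1 y (by simp), htgt.symm, hτ.symm⟩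

theorem injOn_target_tauAnti (hg : IsGentle Q) :
    {w | InN Q st w}.InjOn fun w => (w.target Q, w.tauAnti st) := by
  intro w hw w' hw' heq
  obtain ⟨htgt, hτ⟩ := Prod.mk.inj heq
  match w, w', hw, hw' with
  | .triv x ε, .triv y δ, _, _ => exact congrArg₂ Thread.triv htgt hτ
  | .triv _ _, .arrows _, hw, hw' => exact (hw.false_of_triv_of_arrows hw' htgt hτ).elim
  | .arrows _, .triv _ _, hw, hw' =>
    exact (hw'.false_of_triv_of_arrows hw htgt.symm hτ.symm).elim
  | .arrows [], _, hw, _ => exact absurd rfl hw.1.1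
  | _, .arrows [], _, hw' => exact absurd rfl hw'.1.1
  | .arrows (x :: l), .arrows (y :: l'), hw, hw' =>
    obtain ⟨⟨-, hA, hl⟩, -, hmax⟩ := (inN_arrows_iff hg).1 hw
    obtain ⟨⟨-, hA', hl'⟩, -, hmax'⟩ := (inN_arrows_iff hg).1 hw'
    obtain rfl : x = y := st.eq_of_tgt_eq (hA x (by simp)) (hA' y (by simp)) htgt hτ
    rw [eq_of_isChain_cons_of_rightUnique hg.rightUnique_rel hl hl' hmax hmax']

/-- The pairs `(x, ε)` such that no arrow `α` has `sα = x` and `σα = ε`; these are the possible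
values of `(tω, τω)` for maximal antipaths `ω`. -/
def freeStarts (Q : QuivRel) (st : SigmaTau Q) : Finset (ℕ × ℤ) :=
  Q.V ×ˢ {1, -1} \ Q.A.image fun a => (Q.src a, st.σ a)

theorem card_freeStarts_add_card_arrows (hg : IsGentle Q) (st : SigmaTau Q) :
    (freeStarts Q st).card + Q.A.card = 2 * Q.V.card := by
  have hinj : Set.InjOn (fun a => (Q.src a, st.σ a)) Q.A := fun a ha b hb h =>
    st.eq_of_src_eq ha hb (Prod.mk.inj h).1 (Prod.mk.inj h).2
  have hsub : (Q.A.image fun a => (Q.src a, st.σ a)) ⊆ Q.V ×ˢ {1, -1} :=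
    Finset.image_subset_iff.2 fun a ha => by
      simpa using ⟨(hg.src_mem_and_tgt_mem a ha).1, st.σ_pm a ha⟩
  rw [freeStarts, ← Finset.card_image_of_injOn hinj, Finset.card_sdiff_add_card_eq_card hsub,
    Finset.card_product, mul_comm]
  rfl

theorem mapsTo_target_tauAnti_freeStarts (hg : IsGentle Q) :
    {w | InN Q st w}.MapsTo (fun w => (w.target Q, w.tauAnti st)) (freeStarts Q st) := by
  intro w hw
  simpa [freeStarts, hw.target_mem_and_tauAnti hg] using hw.2.1

theorem finite_setOf_inN (hg : IsGentle Q) (st : SigmaTau Q) : {w | InN Q st w}.Finite :=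
  .of_injOn (mapsTo_target_tauAnti_freeStarts hg) (injOn_target_tauAnti hg) (Finset.finite_toSet _)

theorem ncard_setOf_inN_add_card_arrows_le (hg : IsGentle Q) (st : SigmaTau Q) :
    {w | InN Q st w}.ncard + Q.A.card ≤ 2 * Q.V.card := by
  have hle := Set.ncard_le_ncard_of_injOn _ (mapsTo_target_tauAnti_freeStarts (st := st) hg)
    (injOn_target_tauAnti hg) (Finset.finite_toSet _)
  rw [Set.ncard_coe_finset] at hle
  rw [← card_freeStarts_add_card_arrows hg st]
  exact Nat.add_le_add_right hle _

/-- The arrows occurring in a path or antipath. -/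
def Thread.arrowSet : Thread → Finset ℕ
  | .triv _ _ => ∅
  | .arrows l => l.toFinset

theorem Thread.card_arrowSet_le : ∀ w : Thread, w.arrowSet.card ≤ w.len
  | .triv _ _ => le_rfl
  | .arrows l => l.toFinset_card_le

theorem card_arrows_le_ncard_inC_add_qN (hg : IsGentle Q) (st : SigmaTau Q) :
    Q.A.card ≤ {a | InC Q st a}.ncard + qN {w | InN Q st w} := by
  have hC := finite_setOf_inC (Q := Q) (st := st)
  have hN := finite_setOf_inN hg st
  have hcover : Q.A ⊆ hC.toFinset ∪ hN.toFinset.biUnion Thread.arrowSet := by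
    intro a ha
    by_cases haC : InC Q st a
    · simp [haC]
    · obtain ⟨l, hl, hal⟩ : ∃ l, InN Q st (.arrows l) ∧ a ∈ l := by
        by_contra h
        exact haC ⟨ha, h⟩
      refine Finset.mem_union_right _ (Finset.mem_biUnion.2 ⟨.arrows l, by simpa using hl, ?_⟩)
      simpa [Thread.arrowSet] using hal
  calc Q.A.card ≤ hC.toFinset.card + (hN.toFinset.biUnion Thread.arrowSet).card :=
        (Finset.card_le_card hcover).trans (Finset.card_union_le _ _)
    _ ≤ hC.toFinset.card + ∑ w ∈ hN.toFinset, w.len :=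
        Nat.add_le_add_left (Finset.card_biUnion_le.trans
          (Finset.sum_le_sum fun w _ => w.card_arrowSet_le)) _
    _ = {a | InC Q st a}.ncard + qN {w | InN Q st w} := by
        rw [qN, finsum_mem_eq_finite_toFinset_sum _ hN, Set.ncard_eq_toFinset_card _ hC]

end Counting

section ClassA

variable {Q : QuivRel} {st : SigmaTau Q} {m p : ℕ}

theorem setOf_nOrbit : {O | NOrbit Q st O} = eqvGenClasses (PhiRel Q st) {w | InN Q st w} := by
  ext O
  simp [NOrbit, eqvGenClasses, eq_comm]

theorem finite_setOf_nOrbit (hg : IsGentle Q) (st : SigmaTau Q) : {O | NOrbit Q st O}.Finite :=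
  setOf_nOrbit ▸ (finite_setOf_inN hg st).image _

theorem finite_setOf_cOrbit (Q : QuivRel) (st : SigmaTau Q) : {O | COrbit Q st O}.Finite :=
  setOf_cOrbit ▸ finite_setOf_inC.image _

theorem sUnion_setOf_nOrbit : ⋃₀ {O | NOrbit Q st O} = {w | InN Q st w} := by
  rw [setOf_nOrbit, sUnion_eqvGenClasses fun _ _ h => ⟨h.1, h.2.1⟩]

theorem NOrbit.pN_ne_zero (hg : IsGentle Q) {O : Set Thread} (hO : NOrbit Q st O) : pN O ≠ 0 := by
  have hsub : O ⊆ {w | InN Q st w} := sUnion_setOf_nOrbit ▸ Set.subset_sUnion_of_mem hO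
  refine (Set.ncard_pos ((finite_setOf_inN hg st).subset hsub)).2 ?_ |>.ne'
  exact nonempty_of_mem_eqvGenClasses (setOf_nOrbit.subset hO)

theorem fInv_zero_left (hg : IsGentle Q) (st : SigmaTau Q) (q : ℕ) :
    fInv Q st (0, q) = {O ∈ {O | COrbit Q st O} | O.ncard = q}.ncard := by
  have hN : {O | NOrbit Q st O ∧ pN O = 0 ∧ qN O = q} = ∅ :=
    Set.eq_empty_of_forall_notMem fun O ⟨hO, hp, _⟩ => hO.pN_ne_zero hg hp
  simp [fInv, hN]

theorem fInv_of_ne_zero (hp : p ≠ 0) (q : ℕ) :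
    fInv Q st (p, q) = {O ∈ {O | NOrbit Q st O} | (pN O, qN O) = (p, q)}.ncard := by
  simp [fInv, hp]

theorem nOrbits_of_fInv (hg : IsGentle Q)
    (hf : ∀ x, fInv Q st x = m * charFn 0 3 x + charFn (p + m + 2) p x) :
    {O | NOrbit Q st O}.ncard = 1 ∧ ∀ O, NOrbit Q st O → (pN O, qN O) = (p + m + 2, p) := by
  refine ncard_eq_and_forall_eq_of_ncard_fiber (finite_setOf_nOrbit hg st)
    (fun O => (pN O, qN O)) ?_ ?_
  · rw [← fInv_of_ne_zero (by lia), hf]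
    simp [charFn]
  · rintro ⟨p', q'⟩ hne
    obtain rfl | hp' := eq_or_ne p' 0
    · have hempty : {O ∈ {O | NOrbit Q st O} | (pN O, qN O) = (0, q')} = ∅ :=
        Set.eq_empty_of_forall_notMem fun O ⟨hO, h⟩ => hO.pN_ne_zero hg (Prod.mk.inj h).1
      rw [hempty, Set.ncard_empty]
    · rw [← fInv_of_ne_zero hp', hf]
      simp [charFn, hp', hne]

theorem cOrbits_of_fInv (hg : IsGentle Q)
    (hf : ∀ x, fInv Q st x = m * charFn 0 3 x + charFn (p + m + 2) p x) :
    {O | COrbit Q st O}.ncard = m ∧ ∀ O, COrbit Q st O → O.ncard = 3 := by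
  refine ncard_eq_and_forall_eq_of_ncard_fiber (finite_setOf_cOrbit Q st) Set.ncard ?_ ?_
  · rw [← fInv_zero_left hg, hf]
    simp [charFn]
  · intro q hq
    rw [← fInv_zero_left hg, hf]
    simp [charFn, hq]

theorem pN_qN_setOf_inN (hg : IsGentle Q)
    (hf : ∀ x, fInv Q st x = m * charFn 0 3 x + charFn (p + m + 2) p x) :
    (pN {w | InN Q st w}, qN {w | InN Q st w}) = (p + m + 2, p) := by
  obtain ⟨hone, hval⟩ := nOrbits_of_fInv hg hf
  obtain ⟨O, hO⟩ := Set.ncard_eq_one.1 hone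
  rw [← sUnion_setOf_nOrbit, hO, Set.sUnion_singleton]
  exact hval O (hO.superset rfl)

theorem ncard_setOf_inC_le (hg : IsGentle Q)
    (hf : ∀ x, fInv Q st x = m * charFn 0 3 x + charFn (p + m + 2) p x) :
    {a | InC Q st a}.ncard ≤ 3 * m := by
  obtain ⟨hm, hthree⟩ := cOrbits_of_fInv hg hf
  rw [← hm, setOf_cOrbit]
  exact ncard_le_mul_ncard_eqvGenClasses (fun _ _ h => ⟨h.1, h.2.1⟩) finite_setOf_inC
    fun O hO => (hthree O (setOf_cOrbit.superset hO)).le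

theorem ClassA.card_arrows_add_one_le (hA : ClassA Q st) :
    Q.A.card + 1 ≤ Q.V.card + {O | COrbit Q st O}.ncard := by
  obtain ⟨hg, m, p, hf⟩ := hA
  obtain ⟨hp, hq⟩ := Prod.mk.inj (pN_qN_setOf_inN hg hf)
  have hN : p + m + 2 + Q.A.card ≤ 2 * Q.V.card :=
    hp ▸ ncard_setOf_inN_add_card_arrows_le hg st
  have hA : Q.A.card ≤ 3 * m + p :=
    (card_arrows_le_ncard_inC_add_qN hg st).trans
      (Nat.add_le_add (ncard_setOf_inC_le hg hf) hq.le)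
  have hm := (cOrbits_of_fInv hg hf).1
  lia

end ClassA

theorem stmt10_general (Q : QuivRel) (st : SigmaTau Q) (hg : IsGentle Q)
    (hcard : Q.A.card + 1 ≤ Q.V.card + {O | COrbit Q st O}.ncard) (a : ℕ) (ha : a ∈ Q.A) :
    (BranchArrow Q a ↔ ¬ InC Q st a) ∧ (CycleArrow Q a ↔ InC Q st a) := by
  have h : Connected (deleteArrows Q {a}) ↔ InC Q st a :=
    ⟨inC_of_connected_deleteArrows hg hcard ha, InC.connected_deleteArrows hg⟩
  simp [BranchArrow, CycleArrow, ha, h]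

/-- For `𝚫 ∈ 𝒜` and an arrow `α`: `α` is a branch arrow iff
`α ∉ 𝒞_𝚫`, and `α` is a cycle arrow iff `α ∈ 𝒞_𝚫`. -/
theorem stmt10 (Q : QuivRel) (st : SigmaTau Q) (hA : ClassA Q st)
    (a : ℕ) (ha : a ∈ Q.A) :
    (BranchArrow Q a ↔ ¬ InC Q st a) ∧ (CycleArrow Q a ↔ InC Q st a) :=
  stmt10_general Q st hA.1 hA.card_arrows_add_one_le a ha

end GentleQuiv
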